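/- For every real number s > 0, with t = t(s), the (1,1)-entry of the matrix L = X⁻⁴·W*·W (where W = X·Y·X⁻¹·Y⁻¹·X·Y and W* = Y·X·Y⁻¹·X⁻¹·Y·X) equals B(s) = [ s·(1 − (2+s)t + t²)·(s − (2+2s+s²)t + (1+s)t²)² + (1+s−t)²·t³·(s − (1+s)²t + s·t²)² ] / ((t−1)²·t⁵). -/

import Mathlib

/-!
The identity holds for every value of `t > 1`, not only for the particular function `t(s)`: write
`r = √t > 1`. Both `X` and `Y` have determinant one, so their inverses are the adjugates, and the
`(1,1)`-entry of `X⁻⁴ W* W` is an explicit rational function of `s` and `r` with denominators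
powers of `r` and `r² - 1` (`entry_identity`). The only analytic input is `t(s) > 1`
(`one_lt_t`), which makes these denominators nonzero.
-/

open Real Filter Topology

noncomputable def T (s : ℝ) : ℝ := (2 + 3*s + 2*s^2 + Real.sqrt (s^2 + 4)) / (2*s)

noncomputable def t (s : ℝ) : ℝ := (T s + Real.sqrt ((T s)^2 - 4)) / 2

noncomputable def X (s : ℝ) : Matrix (Fin 2) (Fin 2) ℝ :=
  !![Real.sqrt (t s), 0; 0, 1 / Real.sqrt (t s)]

noncomputable def Y (s : ℝ) : Matrix (Fin 2) (Fin 2) ℝ :=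
  !![(t s - s - 1) / (Real.sqrt (t s) - 1 / Real.sqrt (t s)),
     s / (Real.sqrt (t s) - 1 / Real.sqrt (t s))^2 - 1;
     -s,
     (s + 1 - 1 / t s) / (Real.sqrt (t s) - 1 / Real.sqrt (t s))]

noncomputable def B (s : ℝ) : ℝ :=
  (s * (1 - (2 + s) * t s + (t s)^2) * (s - (2 + 2*s + s^2) * t s + (1 + s) * (t s)^2)^2
    + (1 + s - t s)^2 * (t s)^3 * (s - (1 + s)^2 * t s + s * (t s)^2)^2)
  / ((t s - 1)^2 * (t s)^5)

lemma one_lt_t (s : ℝ) (hs : 0 < s) : 1 < t s := by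
  have hT : 2 < T s := by
    unfold T
    rw [lt_div_iff₀ (by positivity)]
    nlinarith [Real.sqrt_nonneg (s ^ 2 + 4), sq_nonneg (s - 1)]
  unfold t
  linarith [Real.sqrt_nonneg ((T s) ^ 2 - 4)]

lemma inv_of_det_one (a b c d : ℝ) (h : a * d - b * c = 1) :
    (!![a, b; c, d])⁻¹ = !![d, -b; -c, a] := by
  apply Matrix.inv_eq_right_inv
  ext i j
  fin_cases i <;> fin_cases j <;> simp [Matrix.mul_apply, Fin.sum_univ_two] <;> linarith

/-- The claimed formula with `r = √t`, as an identity of rational functions in the free variables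
`s` and `r`. -/
lemma entry_identity (s r : ℝ) (hr : 1 < r) (M N : Matrix (Fin 2) (Fin 2) ℝ)
    (hM : M = !![r, 0; 0, 1 / r])
    (hN : N = !![(r ^ 2 - s - 1) / (r - 1 / r), s / (r - 1 / r) ^ 2 - 1;
      -s, (s + 1 - 1 / r ^ 2) / (r - 1 / r)]) :
    ((M⁻¹) ^ 4 * (N * M * N⁻¹ * M⁻¹ * N * M) * (M * N * M⁻¹ * N⁻¹ * M * N)) 0 0 =
      (s * (1 - (2 + s) * r ^ 2 + (r ^ 2) ^ 2)
          * (s - (2 + 2 * s + s ^ 2) * r ^ 2 + (1 + s) * (r ^ 2) ^ 2) ^ 2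
        + (1 + s - r ^ 2) ^ 2 * (r ^ 2) ^ 3 * (s - (1 + s) ^ 2 * r ^ 2 + s * (r ^ 2) ^ 2) ^ 2)
      / ((r ^ 2 - 1) ^ 2 * (r ^ 2) ^ 5) := by
  have h0 : r ≠ 0 := by positivity
  have h1 : r ^ 2 - 1 ≠ 0 := by nlinarith
  have hd : r - 1 / r = (r ^ 2 - 1) / r := by field_simp
  have hN' : N = !![r * (r ^ 2 - s - 1) / (r ^ 2 - 1), s * r ^ 2 / (r ^ 2 - 1) ^ 2 - 1;
      -s, ((s + 1) * r ^ 2 - 1) / (r * (r ^ 2 - 1))] := by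
    rw [hN, hd]
    congr! 3
    · field_simp
    · field_simp
    · field_simp
  have hMi : M⁻¹ = !![1 / r, -0; -0, r] := by
    rw [hM]
    exact inv_of_det_one _ _ _ _ (by field_simp; ring)
  have hNi := inv_of_det_one (r * (r ^ 2 - s - 1) / (r ^ 2 - 1))
    (s * r ^ 2 / (r ^ 2 - 1) ^ 2 - 1) (-s) (((s + 1) * r ^ 2 - 1) / (r * (r ^ 2 - 1)))
    (by field_simp; ring)
  rw [hMi, hN', hNi, hM]
  simp only [pow_succ (_ : Matrix (Fin 2) (Fin 2) ℝ), pow_zero, one_mul, Matrix.mul_apply,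
    Fin.sum_univ_two, Matrix.of_apply, Matrix.cons_val', Matrix.cons_val_zero,
    Matrix.cons_val_one, Matrix.cons_val_fin_one, neg_zero, zero_mul, mul_zero, add_zero,
    zero_add]
  field_simp
  ring

theorem stmt_12 : ∀ s : ℝ, 0 < s →
    (((X s)⁻¹)^4 * (Y s * X s * (Y s)⁻¹ * (X s)⁻¹ * Y s * X s)
      * (X s * Y s * (X s)⁻¹ * (Y s)⁻¹ * X s * Y s)) 0 0 = B s := by
  intro s hs
  have ht := one_lt_t s hs
  have hr : 1 < Real.sqrt (t s) := by
    rw [Real.lt_sqrt (by norm_num)]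
    linarith
  have hsq : Real.sqrt (t s) ^ 2 = t s := Real.sq_sqrt (by linarith)
  have key := entry_identity s (Real.sqrt (t s)) hr (X s) (Y s) rfl (by rw [hsq]; rfl)
  rw [hsq] at key
  exact key
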